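/- arXiv:1112.3255 — 3 statements merged into one kernel-verified Lean document; each statement's English description precedes it below -/
import Mathlib

section
/- Let W be a finite reflection group with root system Φ, a a generic point, Φ⁺ = {α ∈ Φ : ⟨a,α⟩ > 0}, and Δ a simple system for Φ⁺. For I ⊆ Δ let W_I be the subgroup of W generated by {s_α : α ∈ I} and F_I = conv{u(a) : u ∈ W_I}. Then for all w, g ∈ W and I, J ⊆ Δ: w(F_I) ⊆ g(F_J) if and only if the coset wW_I is contained in the coset gW_J (equivalently, g⁻¹w ∈ W_J and W_I ⊆ W_J). -/
/-!
All points of the orbit of `a` lie on one sphere centred at the origin, and every point of a sphere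
is an extreme point of the ball. Hence `w(F_I) ⊆ g(F_J)` holds exactly when the vertices
`w u a`, `u ∈ W_I`, are among the vertices `g v a`, `v ∈ W_J`; since a generic point has trivial
stabilizer, this is the inclusion `wW_I ⊆ gW_J` of cosets.

The stabilizer is trivial by the exchange condition. The reflection in a simple root makes only that
root negative, so if a product `p` of simple reflections makes a simple root `β` negative, then
`p s_β` is obtained from `p` by deleting a factor. If `p s_β` fixes `a`, it preserves positivity of
roots, so `p` does make `β` negative and `p s_β` has a shorter expression; descent ends at `1`.
-/

open scoped RealInnerProductSpace

variable {V : Type*} [NormedAddCommGroup V] [InnerProductSpace ℝ V]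

/-- `s` acts as the orthogonal reflection along the nonzero vector `α`:
`s v = v - 2 (⟪v,α⟫/⟪α,α⟫) α`. -/
def IsReflAlong (s : V ≃ₗᵢ[ℝ] V) (α : V) : Prop :=
  α ≠ 0 ∧ ∀ v : V, s v = v - ((2 * ⟪v, α⟫ / ⟪α, α⟫) • α)

/-- `s` is a reflection. -/
def IsReflection (s : V ≃ₗᵢ[ℝ] V) : Prop :=
  ∃ α : V, IsReflAlong s α

/-- A reflection group: a subgroup of the group of linear isometries of `V` generated by
the reflections it contains. -/
def IsReflectionGroup (W : Subgroup (V ≃ₗᵢ[ℝ] V)) : Prop :=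
  W = Subgroup.closure {s | IsReflection s ∧ s ∈ W}

/-- `a` is a generic point for `W`: it is fixed by no reflection belonging to `W`. -/
def IsGeneric (W : Subgroup (V ≃ₗᵢ[ℝ] V)) (a : V) : Prop :=
  ∀ s ∈ W, IsReflection s → s a ≠ a

/-- The `W`-orbit of the point `a`. -/
def orbitSet (W : Subgroup (V ≃ₗᵢ[ℝ] V)) (a : V) : Set V :=
  {x | ∃ w ∈ W, x = w a}

/-- The permutahedron `Perm^a(W)`: the convex hull of the `W`-orbit of `a`. -/
noncomputable def permutahedron (W : Subgroup (V ≃ₗᵢ[ℝ] V)) (a : V) : Set V :=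
  convexHull ℝ (orbitSet W a)

/-- A root system for `W`. -/
structure IsRootSystem (W : Subgroup (V ≃ₗᵢ[ℝ] V)) (Φ : Set V) : Prop where
  finite : Φ.Finite
  nonempty : Φ.Nonempty
  ne_zero : ∀ α ∈ Φ, α ≠ 0
  gen : W = Subgroup.closure {s | ∃ α ∈ Φ, IsReflAlong s α}
  line : ∀ α ∈ Φ, {β ∈ Φ | ∃ t : ℝ, β = t • α} = {α, -α}
  stable : ∀ w ∈ W, (⇑w) '' Φ = Φ

/-- The positive system determined by the generic point `a`: roots `α` with `⟪a, α⟫ > 0`. -/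
def posSystem (a : V) (Φ : Set V) : Set V :=
  {α ∈ Φ | 0 < ⟪a, α⟫}

/-- `Δ` is a simple system for the positive system `Φp`: `Δ ⊆ Φp` is linearly independent and
every element of `Φp` is a linear combination of `Δ` with nonnegative coefficients. -/
def IsSimpleSystem (Φp Δ : Set V) : Prop :=
  Δ ⊆ Φp ∧ LinearIndependent ℝ ((↑) : Δ → V) ∧
    ∀ β ∈ Φp, ∃ c : V →₀ ℝ, (c.support : Set V) ⊆ Δ ∧ (∀ v : V, 0 ≤ c v) ∧
      β = c.sum fun v r => r • v

/-- The subgroup generated by the reflections along the vectors of `I`. -/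
def genSubgroup (I : Set V) : Subgroup (V ≃ₗᵢ[ℝ] V) :=
  Subgroup.closure {s | ∃ β ∈ I, IsReflAlong s β}

open scoped NNReal

/-- The orthogonal reflection in the hyperplane `αᗮ`, as an element of the isometry group. It is
the identity for `α = 0`. -/
noncomputable def rootRefl (α : V) : V ≃ₗᵢ[ℝ] V := (ℝ ∙ α)ᗮ.reflection

lemma rootRefl_apply (α v : V) : rootRefl α v = v - (2 * ⟪v, α⟫ / ⟪α, α⟫) • α := by
  rw [rootRefl, Submodule.reflection_orthogonal_apply, Submodule.reflection_singleton_apply,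
    real_inner_self_eq_norm_sq, real_inner_comm, two_smul, neg_sub, ← add_smul]
  simp only [RCLike.ofReal_real_eq_id, id_eq]
  ring_nf

lemma rootRefl_self (α : V) : rootRefl α α = -α :=
  Submodule.reflection_orthogonalComplement_singleton_eq_neg α

lemma rootRefl_mul_self (α : V) : rootRefl α * rootRefl α = 1 :=
  Submodule.reflection_mul_reflection _

lemma rootRefl_inv (α : V) : (rootRefl α)⁻¹ = rootRefl α :=
  Submodule.reflection_inv

lemma rootRefl_smul {c : ℝ} (hc : c ≠ 0) (α : V) : rootRefl (c • α) = rootRefl α := by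
  simp only [rootRefl, Submodule.span_singleton_smul_eq hc.isUnit]

lemma rootRefl_neg (α : V) : rootRefl (-α) = rootRefl α := by
  simp only [rootRefl, Submodule.span_neg, ← Set.neg_singleton]

lemma rootRefl_map_mul (u : V ≃ₗᵢ[ℝ] V) (α : V) : rootRefl (u α) * u = u * rootRefl α := by
  ext v
  simp [rootRefl_apply, LinearIsometryEquiv.inner_map_map]

lemma isReflAlong_iff {s : V ≃ₗᵢ[ℝ] V} {α : V} : IsReflAlong s α ↔ α ≠ 0 ∧ s = rootRefl α := by
  simp only [IsReflAlong, LinearIsometryEquiv.ext_iff, rootRefl_apply]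

lemma rootRefl_mem_genSubgroup {I : Set V} {α : V} (hα : α ∈ I) (hα₀ : α ≠ 0) :
    rootRefl α ∈ genSubgroup I :=
  Subgroup.subset_closure ⟨α, hα, isReflAlong_iff.2 ⟨hα₀, rfl⟩⟩

lemma exists_list_of_mem_genSubgroup {I : Set V} {w : V ≃ₗᵢ[ℝ] V} (hw : w ∈ genSubgroup I) :
    ∃ L : List V, (∀ α ∈ L, α ∈ I) ∧ (L.map rootRefl).prod = w := by
  have cons {s u : V ≃ₗᵢ[ℝ] V} (hs : ∃ β ∈ I, s = rootRefl β) :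
      (∃ L : List V, (∀ α ∈ L, α ∈ I) ∧ (L.map rootRefl).prod = u) →
        ∃ L : List V, (∀ α ∈ L, α ∈ I) ∧ (L.map rootRefl).prod = s * u := by
    rintro ⟨L, hL, rfl⟩
    obtain ⟨β, hβ, rfl⟩ := hs
    exact ⟨β :: L, List.forall_mem_cons.2 ⟨hβ, hL⟩, List.prod_cons⟩
  induction hw using Subgroup.closure_induction_left with
  | one => exact ⟨[], List.forall_mem_nil _, rfl⟩
  | mul_left s hs u _ ih =>
    obtain ⟨β, hβ, hs⟩ := hs
    exact cons ⟨β, hβ, (isReflAlong_iff.1 hs).2⟩ ih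
  | inv_mul_cancel s hs u _ ih =>
    obtain ⟨β, hβ, hs⟩ := hs
    exact cons ⟨β, hβ, by rw [(isReflAlong_iff.1 hs).2, rootRefl_inv]⟩ ih

lemma exists_span_eq_forall_notMem_span_sdiff {R M : Type*} [Semiring R] [AddCommMonoid M]
    [Module R M] {s : Set M} (hs : s.Finite) :
    ∃ t ⊆ s, Submodule.span R t = Submodule.span R s ∧
      ∀ x ∈ t, x ∉ Submodule.span R (t \ {x}) := by
  obtain ⟨t, ⟨hts, hspan⟩, hmin⟩ :=
    (hs.finite_subsets.subset (Set.sep_subset _ fun t => Submodule.span R t = Submodule.span R s)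
      ).exists_minimal ⟨s, Set.Subset.rfl, rfl⟩
  refine ⟨t, hts, hspan, fun x hx hmem => ?_⟩
  have hspan' : Submodule.span R (t \ {x}) = Submodule.span R s := by
    rw [← hspan, ← Submodule.span_insert_eq_span hmem, Set.insert_sdiff_self_of_mem hx]
  exact (hmin ⟨Set.sdiff_subset.trans hts, hspan'⟩ Set.sdiff_subset hx).2 rfl

section Cone

variable {M : Type*} [AddCommGroup M] [Module ℝ M] {f : M →ₗ[ℝ] ℝ} {D : Set M} {x y v : M}

lemma exists_pos_of_mem_span (hx : x ∈ Submodule.span ℝ≥0 D) (hfx : 0 < f x) :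
    ∃ δ ∈ D, 0 < f δ := by
  by_contra! hD
  refine hfx.not_ge ?_
  clear hfx
  induction hx using Submodule.span_induction with
  | mem δ hδ => exact hD δ hδ
  | zero => exact (map_zero f).le
  | add x y _ _ hx hy => exact (map_add f x y).trans_le (add_nonpos hx hy)
  | smul c x _ hx =>
    rw [NNReal.smul_def, map_smul]
    exact mul_nonpos_of_nonneg_of_nonpos c.2 hx

lemma eq_zero_or_pos_of_mem_span (hD : ∀ δ ∈ D, 0 < f δ) (hx : x ∈ Submodule.span ℝ≥0 D) :
    x = 0 ∨ 0 < f x := by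
  induction hx using Submodule.span_induction with
  | mem δ hδ => exact .inr (hD δ hδ)
  | zero => exact .inl rfl
  | add x y _ _ hx hy =>
    rcases hx with rfl | hx
    · rwa [zero_add]
    rcases hy with rfl | hy
    · exact .inr (by rwa [add_zero])
    · exact .inr (by rw [map_add]; exact add_pos hx hy)
  | smul c x _ hx =>
    rcases hx with rfl | hx
    · exact .inl (smul_zero c)
    rcases eq_zero_or_pos c with rfl | hc
    · exact .inl (zero_smul _ x)
    · exact .inr (by rw [NNReal.smul_def, map_smul]; exact mul_pos hc hx)

lemma eq_zero_of_add_eq_smul (hD : ∀ δ ∈ D, 0 < f δ) (hfv : 0 < f v)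
    (hv : v ∉ Submodule.span ℝ≥0 D) (hx : x ∈ Submodule.span ℝ≥0 D)
    (hy : y ∈ Submodule.span ℝ≥0 D) {t : ℝ} (h : x + y = t • v) : x = 0 := by
  have ht : t ≤ 0 := by
    by_contra! ht
    lift t to ℝ≥0 using ht.le
    exact hv ((Submodule.smul_mem_iff _ (NNReal.coe_pos.1 ht).ne').1 (h ▸ add_mem hx hy))
  have hsum : f x + f y ≤ 0 := by
    rw [← map_add, h, map_smul]
    exact mul_nonpos_of_nonpos_of_nonneg ht hfv.le
  have hy_nonneg : 0 ≤ f y :=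
    (eq_zero_or_pos_of_mem_span hD hy).elim (fun h => (h ▸ map_zero f).ge) le_of_lt
  exact (eq_zero_or_pos_of_mem_span hD hx).resolve_right fun hx_pos => by linarith

end Cone

/-- The unit normals of the mirrors of the reflections in `W`, two for each mirror. For a finite
reflection group they form a root system. -/
def unitRoots (W : Subgroup (V ≃ₗᵢ[ℝ] V)) : Set V := {α | ‖α‖ = 1 ∧ rootRefl α ∈ W}

/-- The simple roots of the positive system that `a` cuts out of `unitRoots W`, characterized as
the positive roots `δ` whose reflection makes no positive root other than `δ` negative. -/
def simpleRoots (W : Subgroup (V ≃ₗᵢ[ℝ] V)) (a : V) : Set V :=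
  {δ ∈ posSystem a (unitRoots W) |
    ∀ β ∈ posSystem a (unitRoots W), ⟪a, rootRefl δ β⟫ < 0 → β = δ}

section Roots

variable {W : Subgroup (V ≃ₗᵢ[ℝ] V)} {a α β δ : V}

lemma ne_zero_of_mem_unitRoots (hα : α ∈ unitRoots W) : α ≠ 0 :=
  norm_ne_zero_iff.1 (hα.1.trans_ne one_ne_zero)

lemma map_mem_unitRoots {u : V ≃ₗᵢ[ℝ] V} (hu : u ∈ W) (hα : α ∈ unitRoots W) :
    u α ∈ unitRoots W := by
  refine ⟨(u.norm_map α).trans hα.1, ?_⟩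
  rw [eq_mul_inv_of_mul_eq (rootRefl_map_mul u α)]
  exact mul_mem (mul_mem hu hα.2) (inv_mem hu)

lemma neg_mem_unitRoots (hα : α ∈ unitRoots W) : -α ∈ unitRoots W :=
  ⟨(norm_neg α).trans hα.1, (rootRefl_neg α).symm ▸ hα.2⟩

lemma exists_mem_unitRoots_of_isReflection {s : V ≃ₗᵢ[ℝ] V} (hs : IsReflection s) (hsW : s ∈ W) :
    ∃ α ∈ unitRoots W, rootRefl α = s := by
  obtain ⟨α, hα⟩ := hs
  obtain ⟨hα₀, rfl⟩ := isReflAlong_iff.1 hα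
  have hunit : rootRefl (‖α‖⁻¹ • α) = rootRefl α :=
    rootRefl_smul (inv_ne_zero (norm_ne_zero_iff.2 hα₀)) α
  exact ⟨‖α‖⁻¹ • α, ⟨norm_smul_inv_norm hα₀, hunit ▸ hsW⟩, hunit⟩

lemma IsGeneric.inner_ne_zero (ha : IsGeneric W a) (hα : α ∈ unitRoots W) : ⟪a, α⟫ ≠ 0 := by
  intro h
  refine ha _ hα.2 ⟨α, isReflAlong_iff.2 ⟨ne_zero_of_mem_unitRoots hα, rfl⟩⟩ ?_
  simp [rootRefl_apply, h]

lemma eq_of_mem_posSystem_of_eq_smul (hα : α ∈ posSystem a (unitRoots W))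
    (hβ : β ∈ posSystem a (unitRoots W)) {c : ℝ} (h : α = c • β) : α = β := by
  have hc : 0 < c := by
    have hα_pos : 0 < ⟪a, α⟫ := hα.2
    rwa [h, inner_smul_right, mul_pos_iff_of_pos_right hβ.2] at hα_pos
  refine (sameRay_iff_of_norm_eq (hα.1.1.trans hβ.1.1.symm)).1 ?_
  exact h ▸ SameRay.sameRay_pos_smul_left β hc

lemma rootRefl_injOn_posSystem : Set.InjOn rootRefl (posSystem a (unitRoots W)) := by
  intro α hα β hβ h
  have hneg : α - (2 * ⟪α, β⟫ / ⟪β, β⟫) • β = -α := by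
    rw [← rootRefl_apply, ← h, rootRefl_self]
  refine eq_of_mem_posSystem_of_eq_smul hα hβ (c := ⟪α, β⟫ / ⟪β, β⟫) ?_
  linear_combination (norm := module) (2⁻¹ : ℝ) • hneg

lemma finite_posSystem_unitRoots (hW : (W : Set (V ≃ₗᵢ[ℝ] V)).Finite) :
    (posSystem a (unitRoots W)).Finite :=
  hW.of_injOn (fun _ hα => hα.1.2) rootRefl_injOn_posSystem

lemma mem_simpleRoots_of_notMem_span {D : Set V} (hD : D ⊆ posSystem a (unitRoots W))
    (hspan : posSystem a (unitRoots W) ⊆ Submodule.span ℝ≥0 D) (hδ : δ ∈ D)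
    (hδD : δ ∉ Submodule.span ℝ≥0 (D \ {δ})) : δ ∈ simpleRoots W a := by
  refine ⟨hD hδ, fun β hβ hneg => ?_⟩
  have hγ : -rootRefl δ β ∈ posSystem a (unitRoots W) :=
    ⟨neg_mem_unitRoots (map_mem_unitRoots (hD hδ).1.2 hβ.1), by
      rw [inner_neg_right]; exact neg_pos.2 hneg⟩
  rw [← Set.insert_sdiff_self_of_mem hδ] at hspan
  -- `β - s_δ β` is a multiple of `δ`, while the components of `β` and `-s_δ β` away from `δ` lie
  -- in a cone without `δ` on which `a` is positive: they cannot cancel, so they vanish.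
  obtain ⟨c, z, hz, hβz⟩ := Submodule.mem_span_insert.1 (hspan hβ)
  obtain ⟨d, z', hz', hγz'⟩ := Submodule.mem_span_insert.1 (hspan hγ)
  have hadd : z + z' = (2 * ⟪β, δ⟫ / ⟪δ, δ⟫ - c - d) • δ := by
    rw [rootRefl_apply] at hγz'
    linear_combination (norm := skip) -hβz - hγz'
    simp only [NNReal.smul_def]
    module
  have hz₀ : z = 0 :=
    eq_zero_of_add_eq_smul (f := innerₗ V a) (fun ε hε => (hD hε.1).2) (hD hδ).2 hδD hz hz' hadd
  refine eq_of_mem_posSystem_of_eq_smul hβ (hD hδ) (c := c) ?_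
  rw [hβz, hz₀, add_zero, NNReal.smul_def]

lemma exists_mem_simpleRoots_inner_pos (hW : (W : Set (V ≃ₗᵢ[ℝ] V)).Finite)
    (hα : α ∈ posSystem a (unitRoots W)) : ∃ δ ∈ simpleRoots W a, 0 < ⟪α, δ⟫ := by
  obtain ⟨D, hD, hspan, hmin⟩ :=
    exists_span_eq_forall_notMem_span_sdiff (R := ℝ≥0) (finite_posSystem_unitRoots (a := a) hW)
  have hPD : posSystem a (unitRoots W) ⊆ Submodule.span ℝ≥0 D := hspan ▸ Submodule.subset_span
  obtain ⟨δ, hδ, hαδ⟩ := exists_pos_of_mem_span (f := innerₗ V α) (hPD hα)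
    (real_inner_self_pos.2 (ne_zero_of_mem_unitRoots hα.1))
  exact ⟨δ, mem_simpleRoots_of_notMem_span hD hPD hδ (hmin δ hδ), hαδ⟩

lemma IsGeneric.rootRefl_mem_posSystem (ha : IsGeneric W a) (hδ : δ ∈ simpleRoots W a)
    (hα : α ∈ posSystem a (unitRoots W)) (hne : α ≠ δ) :
    rootRefl δ α ∈ posSystem a (unitRoots W) := by
  have hmem : rootRefl δ α ∈ unitRoots W := map_mem_unitRoots hδ.1.1.2 hα.1
  exact ⟨hmem, (ha.inner_ne_zero hmem).lt_or_gt.resolve_left fun h => hne (hδ.2 α hα h)⟩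

/-- Among the positive roots whose reflection is not in the subgroup, take `α` with `⟪a, α⟫`
minimal; if `δ` is simple with `⟪α, δ⟫ > 0`, then `s_δ α` is a positive root with a smaller value
and a reflection conjugate to `s_α` by `s_δ`. -/
lemma IsGeneric.rootRefl_mem_genSubgroup_simpleRoots (ha : IsGeneric W a)
    (hW : (W : Set (V ≃ₗᵢ[ℝ] V)).Finite) (hα : α ∈ posSystem a (unitRoots W)) :
    rootRefl α ∈ genSubgroup (simpleRoots W a) := by
  by_contra hαS
  obtain ⟨α, ⟨hα, hαS⟩, hmin⟩ :=
    ((finite_posSystem_unitRoots (a := a) hW).subset (Set.sep_subset _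
      fun α => rootRefl α ∉ genSubgroup (simpleRoots W a))).exists_minimalFor
      (fun α => ⟪a, α⟫) _ ⟨α, hα, hαS⟩
  obtain ⟨δ, hδ, hαδ⟩ := exists_mem_simpleRoots_inner_pos hW hα
  have hδ₀ : δ ≠ 0 := ne_zero_of_mem_unitRoots hδ.1.1
  have hδS : rootRefl δ ∈ genSubgroup (simpleRoots W a) := rootRefl_mem_genSubgroup hδ hδ₀
  have hne : α ≠ δ := fun h => hαS (h ▸ hδS)
  have hconj : rootRefl (rootRefl δ α) = rootRefl δ * rootRefl α * (rootRefl δ)⁻¹ :=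
    eq_mul_inv_of_mul_eq (rootRefl_map_mul _ _)
  have hsmaller : ⟪a, rootRefl δ α⟫ < ⟪a, α⟫ := by
    rw [rootRefl_apply, inner_sub_right, inner_smul_right, sub_lt_self_iff]
    have hδδ : 0 < ⟪δ, δ⟫ := real_inner_self_pos.2 hδ₀
    exact mul_pos (by positivity) hδ.1.2
  refine hsmaller.not_ge (hmin ⟨ha.rootRefl_mem_posSystem hδ hα hne, fun h => hαS ?_⟩ hsmaller.le)
  rwa [hconj, Subgroup.mul_mem_cancel_right _ (inv_mem hδS),
    Subgroup.mul_mem_cancel_left _ hδS] at h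

lemma IsReflectionGroup.le_genSubgroup_simpleRoots (hrefl : IsReflectionGroup W)
    (hW : (W : Set (V ≃ₗᵢ[ℝ] V)).Finite) (ha : IsGeneric W a) :
    W ≤ genSubgroup (simpleRoots W a) := by
  refine (Eq.le hrefl).trans ((Subgroup.closure_le _).2 ?_)
  rintro _ ⟨hs, hsW⟩
  obtain ⟨α, hα, rfl⟩ := exists_mem_unitRoots_of_isReflection hs hsW
  rcases (ha.inner_ne_zero hα).lt_or_gt with hlt | hgt
  · rw [SetLike.mem_coe, ← rootRefl_neg]
    refine ha.rootRefl_mem_genSubgroup_simpleRoots hW ⟨neg_mem_unitRoots hα, ?_⟩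
    rw [inner_neg_right]
    exact neg_pos.2 hlt
  · exact ha.rootRefl_mem_genSubgroup_simpleRoots hW ⟨hα, hgt⟩

lemma list_prod_rootRefl_mem {L : List V} (hL : ∀ α ∈ L, α ∈ simpleRoots W a) :
    (L.map rootRefl).prod ∈ W :=
  list_prod_mem (List.forall_mem_map.2 fun α hα => (hL α hα).1.1.2)

/-- The exchange condition. With `p` the product of the tail after `α`, if `p β` is positive but
`s_α p β` is negative, then `p β = α`, so that `s_α p s_β = s_α s_α p = p`. -/
lemma IsGeneric.exists_sublist_prod_eq_mul_rootRefl (ha : IsGeneric W a) {L : List V}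
    (hL : ∀ α ∈ L, α ∈ simpleRoots W a) (hβ : β ∈ posSystem a (unitRoots W))
    (hneg : ⟪a, (L.map rootRefl).prod β⟫ < 0) :
    ∃ M : List V, M.Sublist L ∧ M.length < L.length ∧
      (M.map rootRefl).prod = (L.map rootRefl).prod * rootRefl β := by
  induction L with
  | nil => exact absurd hneg hβ.2.not_gt
  | cons α L ih =>
    obtain ⟨hα, hL⟩ := List.forall_mem_cons.1 hL
    rw [List.map_cons, List.prod_cons] at hneg ⊢
    have hroot : (L.map rootRefl).prod β ∈ unitRoots W :=
      map_mem_unitRoots (list_prod_rootRefl_mem hL) hβ.1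
    rcases (ha.inner_ne_zero hroot).lt_or_gt with hlt | hgt
    · obtain ⟨M, hML, hlen, hM⟩ := ih hL hlt
      refine ⟨α :: M, hML.cons_cons α, Nat.succ_lt_succ hlen, ?_⟩
      rw [List.map_cons, List.prod_cons, hM, mul_assoc]
    · have hpβ : (L.map rootRefl).prod β = α := hα.2 _ ⟨hroot, hgt⟩ hneg
      refine ⟨L, List.sublist_cons_self α L, Nat.lt_succ_self _, ?_⟩
      rw [mul_assoc, ← rootRefl_map_mul, hpβ, ← mul_assoc, rootRefl_mul_self, one_mul]

lemma IsGeneric.prod_rootRefl_eq_one_of_apply_eq (ha : IsGeneric W a) {L : List V}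
    (hL : ∀ α ∈ L, α ∈ simpleRoots W a) (hLa : (L.map rootRefl).prod a = a) :
    (L.map rootRefl).prod = 1 := by
  induction hn : L.length using Nat.strong_induction_on generalizing L with | _ n ih => ?_
  rcases L.eq_nil_or_concat' with rfl | ⟨P, β, rfl⟩
  · rfl
  obtain ⟨hP, hβ⟩ := List.forall_mem_append.1 hL
  have hβ : β ∈ simpleRoots W a := hβ β (List.mem_singleton_self β)
  have hprod : ((P ++ [β]).map rootRefl).prod = (P.map rootRefl).prod * rootRefl β := by
    rw [List.map_append, List.prod_append, List.map_singleton, List.prod_singleton]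
  have hneg : ⟪a, (P.map rootRefl).prod β⟫ < 0 := by
    have h : ⟪a, (P.map rootRefl).prod β⟫ = -⟪a, β⟫ := by
      rw [← ((P ++ [β]).map rootRefl).prod.inner_map_map a β, hLa, hprod,
        LinearIsometryEquiv.coe_mul, Function.comp_apply, rootRefl_self, map_neg, inner_neg_right,
        neg_neg]
    rw [h]
    exact neg_neg_of_pos hβ.1.2
  obtain ⟨M, hMP, hlen, hM⟩ := ha.exists_sublist_prod_eq_mul_rootRefl hP hβ.1 hneg
  rw [hprod, ← hM] at hLa ⊢
  rw [List.length_append, List.length_singleton] at hn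
  exact ih M.length (by lia) (fun α hα => hP α (hMP.subset hα)) hLa rfl

theorem IsGeneric.injOn_apply (ha : IsGeneric W a) (hrefl : IsReflectionGroup W)
    (hW : (W : Set (V ≃ₗᵢ[ℝ] V)).Finite) : Set.InjOn (fun w : V ≃ₗᵢ[ℝ] V => w a) W := by
  intro w hw g hg h
  obtain ⟨L, hL, hprod⟩ := exists_list_of_mem_genSubgroup
    (hrefl.le_genSubgroup_simpleRoots hW ha (mul_mem (inv_mem hg) hw))
  have hfix : (g⁻¹ * w) a = a := by
    rw [LinearIsometryEquiv.coe_mul, Function.comp_apply]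
    exact (congrArg g.symm h).trans (g.symm_apply_apply a)
  rw [← hprod] at hfix
  exact (inv_mul_eq_one.1 (hprod ▸ ha.prod_rootRefl_eq_one_of_apply_eq hL hfix)).symm

end Roots

lemma sphere_inter_convexHull_subset {E : Type*} [NormedAddCommGroup E] [NormedSpace ℝ E]
    [StrictConvexSpace ℝ E] {S : Set E} {c : E} {r : ℝ} (hS : S ⊆ Metric.sphere c r) :
    Metric.sphere c r ∩ convexHull ℝ S ⊆ S := by
  have hext : Metric.sphere c r ⊆ Set.extremePoints ℝ (Metric.closedBall c r) := by
    rcases eq_or_ne r 0 with rfl | hr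
    · rw [Metric.sphere_zero, Metric.closedBall_zero, extremePoints_singleton]
    · exact StrictConvexSpace.sphere_subset_extremePoints_closedBall c hr
  have hball : convexHull ℝ S ⊆ Metric.closedBall c r :=
    convexHull_min (hS.trans Metric.sphere_subset_closedBall) (convex_closedBall c r)
  exact fun x hx => extremePoints_convexHull_subset
    (inter_extremePoints_subset_extremePoints_of_subset hball ⟨hx.2, hext hx.1⟩)

section Permutahedron

variable (w g : V ≃ₗᵢ[ℝ] V) (H K : Subgroup (V ≃ₗᵢ[ℝ] V)) (a : V)

lemma image_orbitSet :
    w '' orbitSet H a =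
      (fun u : V ≃ₗᵢ[ℝ] V => u a) '' ((fun u => w * u) '' (H : Set (V ≃ₗᵢ[ℝ] V))) := by
  have horbit : orbitSet H a = (fun u : V ≃ₗᵢ[ℝ] V => u a) '' (H : Set (V ≃ₗᵢ[ℝ] V)) :=
    Set.ext fun _ => exists_congr fun _ => and_congr_right' eq_comm
  rw [horbit, Set.image_image, Set.image_image]
  rfl

lemma image_permutahedron : w '' permutahedron H a = convexHull ℝ (w '' orbitSet H a) :=
  LinearMap.image_convexHull w.toLinearEquiv.toLinearMap _

lemma image_orbitSet_subset_sphere : w '' orbitSet H a ⊆ Metric.sphere 0 ‖a‖ := by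
  rintro _ ⟨_, ⟨u, -, rfl⟩, rfl⟩
  rw [mem_sphere_zero_iff_norm, w.norm_map, u.norm_map]

lemma image_permutahedron_subset_iff :
    w '' permutahedron H a ⊆ g '' permutahedron K a ↔ w '' orbitSet H a ⊆ g '' orbitSet K a := by
  rw [image_permutahedron, image_permutahedron]
  refine ⟨fun h x hx => ?_, convexHull_mono⟩
  exact sphere_inter_convexHull_subset (image_orbitSet_subset_sphere g K a)
    ⟨image_orbitSet_subset_sphere w H a hx, h (subset_convexHull ℝ _ hx)⟩

end Permutahedron

theorem face_translate_subset_iff_coset_subset_general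
    {W : Subgroup (V ≃ₗᵢ[ℝ] V)} (hWfin : (W : Set (V ≃ₗᵢ[ℝ] V)).Finite)
    (hW : IsReflectionGroup W) {a : V} (ha : IsGeneric W a)
    {H K : Subgroup (V ≃ₗᵢ[ℝ] V)} (hH : H ≤ W) (hK : K ≤ W)
    {w g : V ≃ₗᵢ[ℝ] V} (hw : w ∈ W) (hg : g ∈ W) :
    w '' permutahedron H a ⊆ g '' permutahedron K a ↔
      (fun u => w * u) '' (H : Set (V ≃ₗᵢ[ℝ] V)) ⊆ (fun u => g * u) '' (K : Set (V ≃ₗᵢ[ℝ] V)) := by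
  have coset_subset {x : V ≃ₗᵢ[ℝ] V} (hx : x ∈ W) {L : Subgroup (V ≃ₗᵢ[ℝ] V)} (hL : L ≤ W) :
      (fun u => x * u) '' (L : Set (V ≃ₗᵢ[ℝ] V)) ⊆ W :=
    Set.image_subset_iff.2 fun u hu => mul_mem hx (hL hu)
  rw [image_permutahedron_subset_iff, image_orbitSet, image_orbitSet]
  exact (ha.injOn_apply hW hWfin).image_subset_image_iff (coset_subset hw hH) (coset_subset hg hK)

lemma IsRootSystem.genSubgroup_le {W : Subgroup (V ≃ₗᵢ[ℝ] V)} {Φ I : Set V}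
    (hΦ : IsRootSystem W Φ) (hI : I ⊆ Φ) : genSubgroup I ≤ W := by
  refine (Subgroup.closure_mono ?_).trans (Eq.ge hΦ.gen)
  rintro s ⟨β, hβ, hs⟩
  exact ⟨β, hI hβ, hs⟩

lemma IsRootSystem.isReflectionGroup {W : Subgroup (V ≃ₗᵢ[ℝ] V)} {Φ : Set V}
    (hΦ : IsRootSystem W Φ) : IsReflectionGroup W := by
  refine le_antisymm ?_ ((Subgroup.closure_le _).2 fun s hs => hs.2)
  refine (Eq.le hΦ.gen).trans (Subgroup.closure_mono ?_)
  rintro s ⟨α, hα, hs⟩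
  refine ⟨⟨α, hs⟩, hΦ.genSubgroup_le Set.Subset.rfl ?_⟩
  exact Subgroup.subset_closure ⟨α, hα, hs⟩

/-- containment of translates of faces corresponds to containment of cosets:
`w(F_I) ⊆ g(F_J) ↔ wW_I ⊆ gW_J`. -/
theorem face_translate_subset_iff_coset_subset [FiniteDimensional ℝ V]
    (W : Subgroup (V ≃ₗᵢ[ℝ] V)) (hWfin : (W : Set (V ≃ₗᵢ[ℝ] V)).Finite)
    (Φ : Set V) (hΦ : IsRootSystem W Φ) (a : V) (ha : IsGeneric W a)
    (Δ : Set V) (hΔ : IsSimpleSystem (posSystem a Φ) Δ)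
    (I J : Set V) (hI : I ⊆ Δ) (hJ : J ⊆ Δ)
    (w g : V ≃ₗᵢ[ℝ] V) (hw : w ∈ W) (hg : g ∈ W) :
    (⇑w) '' permutahedron (genSubgroup I) a ⊆ (⇑g) '' permutahedron (genSubgroup J) a ↔
      (fun u => w * u) '' (genSubgroup I : Set (V ≃ₗᵢ[ℝ] V)) ⊆
        (fun u => g * u) '' (genSubgroup J : Set (V ≃ₗᵢ[ℝ] V)) :=
  have hΔΦ : Δ ⊆ Φ := hΔ.1.trans (Set.sep_subset _ _)
  face_translate_subset_iff_coset_subset_general hWfin hΦ.isReflectionGroup ha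
    (hΦ.genSubgroup_le (hI.trans hΔΦ)) (hΦ.genSubgroup_le (hJ.trans hΔΦ)) hw hg
end

section
/- Let W be a finite reflection group with root system Φ, a a generic point, Φ⁺ = {α ∈ Φ : ⟨a,α⟩ > 0}, and Δ a simple system for Φ⁺. For I ⊆ Δ let W_I be the subgroup of W generated by {s_α : α ∈ I} and F_I = conv{u(a) : u ∈ W_I}. Then F_I equals the intersection of the permutahedron with the affine subspace through a directed by span_ℝ(I): F_I = conv{w(a) : w ∈ W} ∩ (a + span_ℝ(I)). -/
/-!
Let `f` be a linear functional that is nonnegative on the simple roots. On the orbit of `a` it is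
maximal at `a`, and the maximizers form the orbit of `a` under the parabolic subgroup of the simple
roots killed by `f`. To see this, write an element of `W` as a word in simple reflections and remove
the first letter `s_γ`: if `x` is the point that the rest of the word produces, `s_γ` subtracts from
`x` the multiple `2 ⟪x, γ⟫ / ⟪γ, γ⟫` of `γ`. When `⟪x, γ⟫ ≥ 0` this lowers `f` and one compares with
`x`; when `⟪x, γ⟫ < 0`, the exchange condition gives `s_γ x` by a shorter word.

Hence the hyperplane `f = f a` supports the permutahedron and cuts out the hull of the parabolic
orbit. As the simple roots are linearly independent, there is such an `f` whose zeros among them are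
exactly `I`, and `a + span I` lies in the hyperplane `f = f a`.
-/

open scoped RealInnerProductSpace

variable {V : Type*} [NormedAddCommGroup V] [InnerProductSpace ℝ V]

/-! ### Convexity and linear algebra -/

lemma convexHull_inter_hyperplane {𝕜 E : Type*} [Field 𝕜] [LinearOrder 𝕜] [IsStrictOrderedRing 𝕜]
    [AddCommGroup E] [Module 𝕜 E] {s : Set E} {f : E →ₗ[𝕜] 𝕜} {c : 𝕜} (hf : ∀ x ∈ s, f x ≤ c) :
    convexHull 𝕜 s ∩ {x | f x = c} = convexHull 𝕜 (s ∩ {x | f x = c}) := by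
  refine Set.Subset.antisymm ?_ (Set.subset_inter (convexHull_mono Set.inter_subset_left)
    (convexHull_min Set.inter_subset_right (convex_hyperplane f.isLinear c)))
  rintro x ⟨hx, hfx⟩
  obtain ⟨ι, _, w, z, hw, hw1, hz, rfl⟩ := mem_convexHull_iff_exists_fintype.1 hx
  have hsum : ∑ i, w i * (c - f (z i)) = 0 := by
    simpa [mul_sub, Finset.sum_sub_distrib, ← Finset.sum_mul, hw1, sub_eq_zero] using hfx.symm
  have hslack : ∀ i, w i * (c - f (z i)) = 0 := fun i =>
    (Finset.sum_eq_zero_iff_of_nonneg fun i _ =>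
      mul_nonneg (hw i) (sub_nonneg.2 (hf _ (hz i)))).1 hsum i (Finset.mem_univ i)
  rw [← Finset.sum_subset (Finset.subset_univ {i | w i ≠ 0}) fun i _ hi => by simp_all]
  refine (convex_convexHull 𝕜 _).sum_mem (fun i _ => hw i) (by rwa [Finset.sum_filter_ne_zero])
    fun i hi => subset_convexHull 𝕜 _ ⟨hz i, ?_⟩
  exact (sub_eq_zero.1 ((mul_eq_zero.1 (hslack i)).resolve_left (Finset.mem_filter.1 hi).2)).symm

lemma exists_linearMap_eqOn_of_linearIndepOn {K E F : Type*} [DivisionRing K] [AddCommGroup E]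
    [Module K E] [AddCommGroup F] [Module K F] {s : Set E} (hs : LinearIndepOn K id s)
    (g : E → F) : ∃ f : E →ₗ[K] F, Set.EqOn f g s := by
  refine ⟨(Module.Basis.extend hs).constr ℕ fun v => g v, fun v hv => ?_⟩
  have h := (Module.Basis.extend hs).constr_basis ℕ (fun v => g v)
    ⟨v, Module.Basis.subset_extend hs hv⟩
  rwa [Module.Basis.extend_apply_self] at h

lemma map_eq_of_sub_mem_span {R E F : Type*} [Ring R] [AddCommGroup E] [Module R E]
    [AddCommGroup F] [Module R F] {s : Set E} {f : E →ₗ[R] F} {x y : E} (hf : ∀ v ∈ s, f v = 0)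
    (hxy : x - y ∈ Submodule.span R s) : f x = f y := by
  have hker : x - y ∈ f.ker := Submodule.span_le.2 (fun v hv => LinearMap.mem_ker.2 (hf v hv)) hxy
  rwa [LinearMap.mem_ker, map_sub, sub_eq_zero] at hker

/-! ### Reflections -/

/-- The orthogonal reflection along `α`, as a total function of `α` so that words in reflections
are lists of vectors. For `α ≠ 0` it is the isometry described by `IsReflAlong`; for `α = 0` it is
the identity. -/
noncomputable def rootReflection (α : V) : V ≃ₗᵢ[ℝ] V := (Submodule.span ℝ {α})ᗮ.reflection

lemma rootReflection_apply (α v : V) :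
    rootReflection α v = v - (2 * ⟪v, α⟫ / ⟪α, α⟫) • α := by
  rw [rootReflection, Submodule.reflection_orthogonal_apply, Submodule.reflection_singleton_apply,
    neg_sub, real_inner_comm, real_inner_self_eq_norm_sq, two_smul, ← add_smul, ← add_div,
    ← two_mul]
  rfl

lemma isReflAlong_rootReflection {α : V} (hα : α ≠ 0) : IsReflAlong (rootReflection α) α :=
  ⟨hα, rootReflection_apply α⟩

lemma IsReflAlong.eq_rootReflection {s : V ≃ₗᵢ[ℝ] V} {α : V} (h : IsReflAlong s α) :
    s = rootReflection α := by
  ext v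
  rw [h.2, rootReflection_apply]

lemma rootReflection_self (α : V) : rootReflection α α = -α :=
  Submodule.reflection_orthogonalComplement_singleton_eq_neg α

lemma rootReflection_mul_self (α : V) : rootReflection α * rootReflection α = 1 :=
  Submodule.reflection_mul_reflection _

lemma rootReflection_inv (α : V) : (rootReflection α)⁻¹ = rootReflection α :=
  Submodule.reflection_inv

lemma rootReflection_neg (α : V) : rootReflection (-α) = rootReflection α := by
  simp [rootReflection, ← Set.neg_singleton]

lemma inner_rootReflection_left (α x y : V) :
    ⟪rootReflection α x, y⟫ = ⟪x, rootReflection α y⟫ := by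
  rw [← (rootReflection α).inner_map_map, rootReflection, Submodule.reflection_reflection]

lemma rootReflection_map (u : V ≃ₗᵢ[ℝ] V) (α : V) :
    rootReflection (u α) = u * rootReflection α * u⁻¹ := by
  ext v
  obtain ⟨x, rfl⟩ := u.surjective v
  simp [rootReflection_apply]

lemma rootReflection_map_rootReflection (α β : V) :
    rootReflection (rootReflection α β) =
      rootReflection α * rootReflection β * rootReflection α := by
  rw [rootReflection_map, rootReflection_inv]

/-! ### Groups generated by reflections -/

section Generation

variable {I J : Set V}

lemma genSubgroup_mono (h : I ⊆ J) : genSubgroup I ≤ genSubgroup J :=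
  Subgroup.closure_mono fun _ ⟨α, hα, hs⟩ => ⟨α, h hα, hs⟩

lemma genSubgroup_le {H : Subgroup (V ≃ₗᵢ[ℝ] V)} (h : ∀ α ∈ I, rootReflection α ∈ H) :
    genSubgroup I ≤ H := by
  rw [genSubgroup, Subgroup.closure_le]
  rintro s ⟨α, hα, hs⟩
  exact hs.eq_rootReflection ▸ h α hα

lemma rootReflection_mem_genSubgroup {α : V} (hα : α ∈ I) (hα0 : α ≠ 0) :
    rootReflection α ∈ genSubgroup I :=
  Subgroup.subset_closure ⟨α, hα, isReflAlong_rootReflection hα0⟩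

lemma exists_word_of_mem_genSubgroup {u : V ≃ₗᵢ[ℝ] V} (hu : u ∈ genSubgroup I) :
    ∃ L : List V, (∀ α ∈ L, α ∈ I) ∧ (L.map rootReflection).prod = u := by
  induction hu using Subgroup.closure_induction_left with
  | one => exact ⟨[], by simp, by simp⟩
  | mul_left s hs _ _ ih =>
    obtain ⟨α, hα, hs⟩ := hs
    obtain ⟨L, hL, rfl⟩ := ih
    exact ⟨α :: L, by simpa using ⟨hα, hL⟩, by simp [hs.eq_rootReflection]⟩
  | inv_mul_cancel s hs _ _ ih =>
    obtain ⟨α, hα, hs⟩ := hs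
    obtain ⟨L, hL, rfl⟩ := ih
    exact ⟨α :: L, by simpa using ⟨hα, hL⟩, by simp [hs.eq_rootReflection, rootReflection_inv]⟩

lemma apply_sub_mem_span {u : V ≃ₗᵢ[ℝ] V} (hu : u ∈ genSubgroup I) (x : V) :
    u x - x ∈ Submodule.span ℝ I := by
  obtain ⟨L, hL, rfl⟩ := exists_word_of_mem_genSubgroup hu
  clear hu
  induction L with
  | nil => simp
  | cons γ L ih =>
    simp only [List.mem_cons, forall_eq_or_imp] at hL
    rw [List.map_cons, List.prod_cons, LinearIsometryEquiv.coe_mul, Function.comp_apply,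
      rootReflection_apply, sub_right_comm]
    exact sub_mem (ih hL.2) (Submodule.smul_mem _ _ (Submodule.subset_span hL.1))

lemma orbitSet_mono {H K : Subgroup (V ≃ₗᵢ[ℝ] V)} (h : H ≤ K) (a : V) :
    orbitSet H a ⊆ orbitSet K a :=
  fun _ ⟨u, hu, hx⟩ => ⟨u, h hu, hx⟩

lemma rootReflection_mem_orbitSet {H : Subgroup (V ≃ₗᵢ[ℝ] V)} {a x α : V}
    (hα : rootReflection α ∈ H) (hx : x ∈ orbitSet H a) : rootReflection α x ∈ orbitSet H a := by
  obtain ⟨u, hu, rfl⟩ := hx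
  exact ⟨rootReflection α * u, mul_mem hα hu, rfl⟩

lemma permutahedron_genSubgroup_subset (I : Set V) (a : V) :
    permutahedron (genSubgroup I) a ⊆ {x | x - a ∈ Submodule.span ℝ I} := by
  refine convexHull_min ?_ (AffineSubspace.mk' a (Submodule.span ℝ I)).convex
  rintro _ ⟨u, hu, rfl⟩
  exact apply_sub_mem_span hu a

end Generation

/-! ### Simple systems -/

section SimpleSystem

variable {P Δ : Set V} {f : V →ₗ[ℝ] ℝ} {β : V}

lemma IsSimpleSystem.map_nonneg (h : IsSimpleSystem P Δ) (hf : ∀ α ∈ Δ, 0 ≤ f α) (hβ : β ∈ P) :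
    0 ≤ f β := by
  obtain ⟨c, hcΔ, hc, rfl⟩ := h.2.2 β hβ
  simp only [Finsupp.sum, map_sum, map_smul, smul_eq_mul]
  exact Finset.sum_nonneg fun v hv => mul_nonneg (hc v) (hf v (hcΔ hv))

lemma IsSimpleSystem.mem_span_of_map_eq_zero (h : IsSimpleSystem P Δ) (hf : ∀ α ∈ Δ, 0 ≤ f α)
    (hβ : β ∈ P) (hfβ : f β = 0) : β ∈ Submodule.span ℝ {α ∈ Δ | f α = 0} := by
  obtain ⟨c, hcΔ, hc, rfl⟩ := h.2.2 β hβ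
  simp only [Finsupp.sum, map_sum, map_smul, smul_eq_mul] at hfβ
  have hterm := (Finset.sum_eq_zero_iff_of_nonneg fun v hv =>
    mul_nonneg (hc v) (hf v (hcΔ hv))).1 hfβ
  refine Submodule.sum_mem _ fun v hv => Submodule.smul_mem _ _ (Submodule.subset_span ?_)
  exact ⟨hcΔ hv, (mul_eq_zero.1 (hterm v hv)).resolve_left (Finsupp.mem_support_iff.1 hv)⟩

lemma IsSimpleSystem.exists_linearMap_zeros_eq (h : IsSimpleSystem P Δ) {I : Set V} (hI : I ⊆ Δ) :
    ∃ f : V →ₗ[ℝ] ℝ, (∀ α ∈ Δ, 0 ≤ f α) ∧ {α ∈ Δ | f α = 0} = I := by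
  classical
  obtain ⟨f, hf⟩ := exists_linearMap_eqOn_of_linearIndepOn (s := Δ) h.2.1
    (fun v => if v ∈ I then (0 : ℝ) else 1)
  refine ⟨f, fun α hα => ?_, Set.ext fun α => ⟨fun ⟨hα, hfα⟩ => ?_, fun hα => ⟨hI hα, ?_⟩⟩⟩
  · rw [hf hα]
    positivity
  · simpa [hf hα] using hfα
  · simp [hf (hI hα), hα]

lemma IsSimpleSystem.exists_inner_pos (h : IsSimpleSystem P Δ) (hβ : β ∈ P) (hβ0 : β ≠ 0) :
    ∃ α ∈ Δ, 0 < ⟪β, α⟫ := by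
  by_contra! hle
  have hneg : 0 ≤ -⟪β, β⟫ := h.map_nonneg (f := -(innerₛₗ ℝ β)) (by simpa using hle) hβ
  linarith [real_inner_self_pos.2 hβ0]

end SimpleSystem

/-! ### Positive roots -/

section Roots

variable {W : Subgroup (V ≃ₗᵢ[ℝ] V)} {Φ Δ : Set V} {a α β : V}

lemma IsRootSystem.rootReflection_mem (hΦ : IsRootSystem W Φ) (hα : α ∈ Φ) :
    rootReflection α ∈ W :=
  hΦ.gen ▸ rootReflection_mem_genSubgroup hα (hΦ.ne_zero α hα)

lemma IsRootSystem.map_mem (hΦ : IsRootSystem W Φ) {w : V ≃ₗᵢ[ℝ] V} (hw : w ∈ W) (hα : α ∈ Φ) :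
    w α ∈ Φ :=
  hΦ.stable w hw ▸ Set.mem_image_of_mem w hα

lemma IsRootSystem.neg_mem (hΦ : IsRootSystem W Φ) (hα : α ∈ Φ) : -α ∈ Φ :=
  rootReflection_self α ▸ hΦ.map_mem (hΦ.rootReflection_mem hα) hα

lemma IsRootSystem.eq_of_mem_span_singleton (hΦ : IsRootSystem W Φ) (hα : α ∈ posSystem a Φ)
    (hβ : β ∈ posSystem a Φ) (hspan : β ∈ Submodule.span ℝ {α}) : β = α := by
  obtain ⟨t, ht⟩ := Submodule.mem_span_singleton.1 hspan
  have hline : β ∈ ({α, -α} : Set V) := hΦ.line α hα.1 ▸ ⟨hβ.1, t, ht.symm⟩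
  refine hline.resolve_right fun hneg => hβ.2.not_ge ?_
  rw [hneg, inner_neg_right]
  exact neg_nonpos.2 hα.2.le

variable (hΦ : IsRootSystem W Φ) (ha : IsGeneric W a)
include hΦ ha

lemma mem_posSystem_or_neg_mem (hβ : β ∈ Φ) : β ∈ posSystem a Φ ∨ -β ∈ posSystem a Φ := by
  have hne : ⟪a, β⟫ ≠ 0 := fun h0 =>
    ha _ (hΦ.rootReflection_mem hβ) ⟨β, isReflAlong_rootReflection (hΦ.ne_zero β hβ)⟩
      (by simp [rootReflection_apply, h0])
  rcases hne.lt_or_gt with hneg | hpos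
  · exact Or.inr ⟨hΦ.neg_mem hβ, by rwa [inner_neg_right, neg_pos]⟩
  · exact Or.inl ⟨hβ, hpos⟩

variable (hΔ : IsSimpleSystem (posSystem a Φ) Δ)
include hΔ

lemma rootReflection_mem_posSystem (hα : α ∈ Δ) (hβ : β ∈ posSystem a Φ) (hne : β ≠ α) :
    rootReflection α β ∈ posSystem a Φ := by
  have hαp := hΔ.1 hα
  refine (mem_posSystem_or_neg_mem hΦ ha (hΦ.map_mem (hΦ.rootReflection_mem hαp.1)
    hβ.1)).resolve_right fun hneg => hne (hΦ.eq_of_mem_span_singleton hαp hβ ?_)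
  obtain ⟨f, hf, hzeros⟩ := hΔ.exists_linearMap_zeros_eq (Set.singleton_subset_iff.2 hα)
  have hfα : f α = 0 := (hzeros.ge (Set.mem_singleton α)).2
  have hfneg : 0 ≤ -f β := by
    simpa [rootReflection_apply, hfα] using hΔ.map_nonneg hf hneg
  exact hzeros ▸ hΔ.mem_span_of_map_eq_zero hf hβ
    (le_antisymm (neg_nonneg.1 hfneg) (hΔ.map_nonneg hf hβ))

lemma rootReflection_mem_genSubgroup_simple (hβ : β ∈ posSystem a Φ) :
    rootReflection β ∈ genSubgroup Δ := by
  by_contra hβΔ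
  obtain ⟨γ, ⟨hγ, hγΔ⟩, hmin⟩ := Set.exists_min_image
    {γ ∈ posSystem a Φ | rootReflection γ ∉ genSubgroup Δ} (fun γ => ⟪a, γ⟫)
    (hΦ.finite.subset fun γ hγ => hγ.1.1) ⟨β, hβ, hβΔ⟩
  obtain ⟨α, hα, hpos⟩ := hΔ.exists_inner_pos hγ (hΦ.ne_zero γ hγ.1)
  have hαp := hΔ.1 hα
  have hα0 := hΦ.ne_zero α hαp.1
  have hαmem := rootReflection_mem_genSubgroup hα hα0
  have hne : γ ≠ α := fun h => hγΔ (h ▸ hαmem)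
  have hreflΔ : rootReflection (rootReflection α γ) ∉ genSubgroup Δ := by
    rwa [rootReflection_map_rootReflection, Subgroup.mul_mem_cancel_right _ hαmem,
      Subgroup.mul_mem_cancel_left _ hαmem]
  have hle := hmin _ ⟨rootReflection_mem_posSystem hΦ ha hΔ hα hγ hne, hreflΔ⟩
  have hdrop : 0 < 2 * ⟪γ, α⟫ / ⟪α, α⟫ * ⟪a, α⟫ :=
    mul_pos (div_pos (mul_pos two_pos hpos) (real_inner_self_pos.2 hα0)) hαp.2
  rw [rootReflection_apply, inner_sub_right, real_inner_smul_right] at hle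
  linarith

lemma genSubgroup_simple_eq : genSubgroup Δ = W := by
  rw [hΦ.gen]
  refine le_antisymm (genSubgroup_mono fun α hα => (hΔ.1 hα).1) (genSubgroup_le fun β hβ => ?_)
  rcases mem_posSystem_or_neg_mem hΦ ha hβ with hpos | hneg
  · exact rootReflection_mem_genSubgroup_simple hΦ ha hΔ hpos
  · exact rootReflection_neg β ▸ rootReflection_mem_genSubgroup_simple hΦ ha hΔ hneg

/-! ### The orbit of a generic point -/

lemma strong_exchange {L : List V} (hL : ∀ γ ∈ L, γ ∈ Δ) (hβ : β ∈ posSystem a Φ)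
    (hneg : ⟪(L.map rootReflection).prod a, β⟫ < 0) :
    ∃ i < L.length, rootReflection β * (L.map rootReflection).prod =
      ((L.eraseIdx i).map rootReflection).prod := by
  induction L generalizing β with
  | nil => exact absurd hβ.2 hneg.not_gt
  | cons γ L ih =>
    simp only [List.mem_cons, forall_eq_or_imp] at hL
    by_cases hβγ : β = γ
    · exact ⟨0, by simp, by simp [hβγ, ← mul_assoc, rootReflection_mul_self]⟩
    · have hneg' : ⟪(L.map rootReflection).prod a, rootReflection γ β⟫ < 0 := by
        simpa [inner_rootReflection_left] using hneg
      obtain ⟨i, hi, hprod⟩ :=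
        ih hL.2 (rootReflection_mem_posSystem hΦ ha hΔ hL.1 hβ hβγ) hneg'
      refine ⟨i + 1, by simpa using hi, ?_⟩
      rw [List.eraseIdx_cons_succ, List.map_cons, List.prod_cons, List.map_cons, List.prod_cons,
        ← hprod, rootReflection_map_rootReflection]
      simp only [← mul_assoc, rootReflection_mul_self, one_mul]

variable {f : V →ₗ[ℝ] ℝ} (hf : ∀ α ∈ Δ, 0 ≤ f α)
include hf

lemma map_word_apply_le_and_mem_orbitSet {L : List V} (hL : ∀ γ ∈ L, γ ∈ Δ) :
    f ((L.map rootReflection).prod a) ≤ f a ∧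
      (f ((L.map rootReflection).prod a) = f a →
        (L.map rootReflection).prod a ∈ orbitSet (genSubgroup {α ∈ Δ | f α = 0}) a) := by
  induction hn : L.length using Nat.strong_induction_on generalizing L with
  | _ n ih =>
    rcases L with _ | ⟨γ, L⟩
    · exact ⟨le_rfl, fun _ => ⟨1, one_mem _, rfl⟩⟩
    simp only [List.mem_cons, forall_eq_or_imp] at hL
    simp only [List.length_cons] at hn
    rw [List.map_cons, List.prod_cons]
    rcases lt_or_ge ⟪(L.map rootReflection).prod a, γ⟫ 0 with hneg | hnonneg
    · obtain ⟨i, hi, hprod⟩ := strong_exchange hΦ ha hΔ hL.2 (hΔ.1 hL.1) hneg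
      rw [hprod]
      exact ih _ (by rw [List.length_eraseIdx_of_lt hi]; lia)
        (fun δ hδ => hL.2 δ (List.mem_of_mem_eraseIdx hδ)) rfl
    · obtain ⟨hle, horbit⟩ := ih _ (by lia) hL.2 rfl
      have hγ0 := hΦ.ne_zero γ (hΔ.1 hL.1).1
      rw [LinearIsometryEquiv.coe_mul, Function.comp_apply]
      set x := (L.map rootReflection).prod a
      have hdrop : 0 ≤ 2 * ⟪x, γ⟫ / ⟪γ, γ⟫ * f γ :=
        mul_nonneg (div_nonneg (mul_nonneg two_pos.le hnonneg) real_inner_self_nonneg)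
          (hf γ hL.1)
      have hfx : f (rootReflection γ x) = f x - 2 * ⟪x, γ⟫ / ⟪γ, γ⟫ * f γ := by
        rw [rootReflection_apply, map_sub, map_smul, smul_eq_mul]
      refine ⟨by linarith, fun heq => ?_⟩
      have hx := horbit (by linarith)
      rcases mul_eq_zero.1 (show 2 * ⟪x, γ⟫ / ⟪γ, γ⟫ * f γ = 0 by linarith) with hcoeff | hfγ
      · rwa [rootReflection_apply, hcoeff, zero_smul, sub_zero]
      · exact rootReflection_mem_orbitSet (rootReflection_mem_genSubgroup ⟨hL.1, hfγ⟩ hγ0) hx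

lemma map_le_of_mem_orbitSet {x : V} (hx : x ∈ orbitSet W a) : f x ≤ f a := by
  obtain ⟨w, hw, rfl⟩ := hx
  rw [← genSubgroup_simple_eq hΦ ha hΔ] at hw
  obtain ⟨L, hL, rfl⟩ := exists_word_of_mem_genSubgroup hw
  exact (map_word_apply_le_and_mem_orbitSet hΦ ha hΔ hf hL).1

lemma orbitSet_inter_hyperplane :
    orbitSet W a ∩ {x | f x = f a} = orbitSet (genSubgroup {α ∈ Δ | f α = 0}) a := by
  refine Set.Subset.antisymm ?_ (Set.subset_inter (orbitSet_mono ?_ a) ?_)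
  · rintro _ ⟨⟨w, hw, rfl⟩, hfw⟩
    rw [← genSubgroup_simple_eq hΦ ha hΔ] at hw
    obtain ⟨L, hL, rfl⟩ := exists_word_of_mem_genSubgroup hw
    exact (map_word_apply_le_and_mem_orbitSet hΦ ha hΔ hf hL).2 hfw
  · rw [hΦ.gen]
    exact genSubgroup_mono fun α hα => (hΔ.1 hα.1).1
  · rintro _ ⟨u, hu, rfl⟩
    exact map_eq_of_sub_mem_span (fun α hα => hα.2) (apply_sub_mem_span hu a)

lemma permutahedron_inter_hyperplane :
    permutahedron W a ∩ {x | f x = f a} =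
      permutahedron (genSubgroup {α ∈ Δ | f α = 0}) a := by
  rw [permutahedron, convexHull_inter_hyperplane fun x => map_le_of_mem_orbitSet hΦ ha hΔ hf,
    orbitSet_inter_hyperplane hΦ ha hΔ hf, permutahedron]

end Roots

theorem face_eq_inter_affine_subspace_general {W : Subgroup (V ≃ₗᵢ[ℝ] V)} {Φ : Set V}
    (hΦ : IsRootSystem W Φ) {a : V} (ha : IsGeneric W a) {Δ : Set V}
    (hΔ : IsSimpleSystem (posSystem a Φ) Δ) {I : Set V} (hI : I ⊆ Δ) :
    permutahedron (genSubgroup I) a =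
      permutahedron W a ∩ {x : V | x - a ∈ Submodule.span ℝ I} := by
  obtain ⟨f, hf, rfl⟩ := hΔ.exists_linearMap_zeros_eq hI
  have hface := permutahedron_inter_hyperplane hΦ ha hΔ hf
  refine Set.Subset.antisymm (Set.subset_inter (hface.ge.trans Set.inter_subset_left)
    (permutahedron_genSubgroup_subset _ a)) ?_
  rintro x ⟨hx, hspan⟩
  exact hface.le ⟨hx, map_eq_of_sub_mem_span (fun α hα => hα.2) hspan⟩

/-- the face `F_I` is the intersection of the permutahedron with the affine
subspace through `a` directed by `span ℝ I`. -/
theorem face_eq_inter_affine_subspace [FiniteDimensional ℝ V]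
    (W : Subgroup (V ≃ₗᵢ[ℝ] V)) (hWfin : (W : Set (V ≃ₗᵢ[ℝ] V)).Finite)
    (Φ : Set V) (hΦ : IsRootSystem W Φ) (a : V) (ha : IsGeneric W a)
    (Δ : Set V) (hΔ : IsSimpleSystem (posSystem a Φ) Δ)
    (I : Set V) (hI : I ⊆ Δ) :
    permutahedron (genSubgroup I) a =
      permutahedron W a ∩ {x : V | x - a ∈ Submodule.span ℝ I} :=
  face_eq_inter_affine_subspace_general hΦ ha hΔ hI
end

section
/- Let W be a finite reflection group with root system Φ, a a generic point, Φ⁺ = {α ∈ Φ : ⟨a,α⟩ > 0}, and Δ a simple system for Φ⁺. Then every nonempty exposed face of the permutahedron conv{w(a) : w ∈ W} is of the form w(F_I) for some w ∈ W and some I ⊆ Δ, where W_I is the subgroup generated by {s_α : α ∈ I} and F_I = conv{u(a) : u ∈ W_I}. -/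
/-!
Let the functional `l` expose the face `B`. Faces of a convex hull are the convex hulls of the
generators they contain, so `B` is the convex hull of the orbit points maximizing `l`. Pick one of
them, `w a`, and replace `l` by `l ∘ w`: now `l` is maximal on the orbit at `a`, and comparing `a`
with its reflections gives `0 ≤ l α` for every positive root `α`. With `I` the set of `α ∈ Δ` such
that `l α = 0`, the maximizers of `l` on the orbit are exactly the points of `W_I a`: the group
`W_I` preserves `l`, and conversely a maximizer can be moved by `W_I` to a point `x` with
`0 ≤ ⟪x, α⟫` for `α ∈ I`. The same holds for `α ∈ Δ \ I`, because `x` still maximizes `l` and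
`0 < l α`. Hence `x` is a dominant point of the orbit of `a`, and the only such point is `a`.

Uniqueness of the dominant point means that an element of `W` preserving positivity of the simple
roots is trivial. Write it as a shortest word in simple reflections; its last letter `s_α` is
preceded by a word sending `α` to a negative root, and the letter of that word which first makes
the image of `α` negative cancels against `s_α`, contradicting minimality.
-/

open scoped RealInnerProductSpace

variable {V : Type*} [NormedAddCommGroup V] [InnerProductSpace ℝ V]

open scoped Pointwise

/-! ### Faces of convex hulls -/

section ConvexHull

variable {𝕜 E : Type*}

lemma subset_convexHull_inter_of_isExtreme [Semiring 𝕜] [PartialOrder 𝕜] [IsOrderedRing 𝕜]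
    [AddCommMonoid E] [Module 𝕜 E] {S F : Set E} (hF : IsExtreme 𝕜 (convexHull 𝕜 S) F) :
    F ⊆ convexHull 𝕜 (F ∩ S) := by
  -- Extremality says that adjoining the complement of `F` to `conv (F ∩ S)` keeps it convex.
  set C : Set E := convexHull 𝕜 S \ F ∪ convexHull 𝕜 (F ∩ S)
  have hC : C ⊆ convexHull 𝕜 S :=
    Set.union_subset Set.sdiff_subset (convexHull_mono Set.inter_subset_right)
  have hconv : Convex 𝕜 C := by
    refine convex_iff_openSegment_subset.2 fun x hx y hy z hz => ?_
    have hzS := (convex_convexHull 𝕜 S).openSegment_subset (hC hx) (hC hy) hz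
    by_cases hzF : z ∈ F
    · have hxF := hF.left_mem_of_mem_openSegment (hC hx) (hC hy) hzF hz
      have hyF := hF.right_mem_of_mem_openSegment (hC hx) (hC hy) hzF hz
      exact Or.inr ((convex_convexHull 𝕜 _).openSegment_subset
        (hx.resolve_left fun h => h.2 hxF) (hy.resolve_left fun h => h.2 hyF) hz)
    · exact Or.inl ⟨hzS, hzF⟩
  have hS : S ⊆ C := fun x hx => by
    by_cases hxF : x ∈ F
    · exact Or.inr (subset_convexHull 𝕜 _ ⟨hxF, hx⟩)
    · exact Or.inl ⟨subset_convexHull 𝕜 S hx, hxF⟩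
  exact fun x hx => (convexHull_min hS hconv (hF.subset hx)).resolve_left fun h => h.2 hx

lemma toExposed_convexHull [TopologicalSpace 𝕜] [Ring 𝕜] [LinearOrder 𝕜] [IsStrictOrderedRing 𝕜]
    [AddCommMonoid E] [TopologicalSpace E] [Module 𝕜 E] (l : StrongDual 𝕜 E) (S : Set E) :
    l.toExposed (convexHull 𝕜 S) = convexHull 𝕜 (l.toExposed S) := by
  have hexp : IsExposed 𝕜 (convexHull 𝕜 S) (l.toExposed (convexHull 𝕜 S)) := fun _ => ⟨l, rfl⟩
  have hinter : l.toExposed (convexHull 𝕜 S) ∩ S = l.toExposed S := by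
    ext x
    refine ⟨fun ⟨hx, hxS⟩ => ⟨hxS, fun y hy => hx.2 y (subset_convexHull 𝕜 S hy)⟩,
      fun ⟨hxS, hx⟩ => ⟨⟨subset_convexHull 𝕜 S hxS, ?_⟩, hxS⟩⟩
    exact convexHull_min hx (convex_halfSpace_le l.toLinearMap.isLinear (l x))
  rw [← hinter]
  exact (subset_convexHull_inter_of_isExtreme hexp.isExtreme).antisymm
    (convexHull_min Set.inter_subset_left (hexp.convex (convex_convexHull 𝕜 S)))

lemma toExposed_image {F : Type*} [TopologicalSpace 𝕜] [Ring 𝕜] [PartialOrder 𝕜] [AddCommMonoid E]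
    [TopologicalSpace E] [Module 𝕜 E] [AddCommMonoid F] [TopologicalSpace F] [Module 𝕜 F]
    (l : StrongDual 𝕜 F) (f : E →L[𝕜] F) (S : Set E) :
    l.toExposed (f '' S) = f '' (l.comp f).toExposed S := by
  ext x
  constructor
  · rintro ⟨⟨y, hy, rfl⟩, hmax⟩
    exact ⟨y, ⟨hy, fun z hz => hmax _ ⟨z, hz, rfl⟩⟩, rfl⟩
  · rintro ⟨y, ⟨hy, hmax⟩, rfl⟩
    exact ⟨⟨y, hy, rfl⟩, Set.forall_mem_image.2 hmax⟩

end ConvexHull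

lemma linearCombination_eq_smul_of_add_eq_smul {ι R M : Type*} [Semiring R] [PartialOrder R]
    [IsOrderedAddMonoid R] [AddCommMonoid M] [Module R M] {v : ι → M} {s : Set ι}
    (hv : LinearIndepOn R v s) {c c' : ι →₀ R} (hc : c ∈ Finsupp.supported R R s)
    (hc' : c' ∈ Finsupp.supported R R s) (hc0 : 0 ≤ c) (hc0' : 0 ≤ c') {i : ι} (hi : i ∈ s) {k : R}
    (h : Finsupp.linearCombination R v c + Finsupp.linearCombination R v c' = k • v i) :
    Finsupp.linearCombination R v c = c i • v i := by
  have hsum : c + c' = Finsupp.single i k :=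
    linearIndepOn_iffₛ.1 hv _ (add_mem hc hc') _ (Finsupp.single_mem_supported R k hi)
      (by rw [map_add, h, Finsupp.linearCombination_single])
  have hle : c ≤ Finsupp.single i k := hsum ▸ le_add_of_nonneg_right hc0'
  have hsingle : c = Finsupp.single i (c i) := by
    ext j
    rcases eq_or_ne j i with rfl | hj
    · rw [Finsupp.single_eq_same]
    · rw [Finsupp.single_eq_of_ne hj]
      exact ((hle j).trans_eq (Finsupp.single_eq_of_ne hj)).antisymm (hc0 j)
  rw [hsingle, Finsupp.linearCombination_single, Finsupp.single_eq_same]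

lemma exists_mem_pow_of_mem_closure {G : Type*} [Group G] {S : Set G} (hS : S⁻¹ = S) {g : G}
    (hg : g ∈ Subgroup.closure S) : ∃ n : ℕ, g ∈ S ^ n := by
  induction hg using Subgroup.closure_induction with
  | mem g hg => exact ⟨1, by rwa [pow_one]⟩
  | one => exact ⟨0, by rw [pow_zero]; rfl⟩
  | mul g h _ _ hg hh =>
    obtain ⟨⟨m, hm⟩, n, hn⟩ := hg, hh
    exact ⟨m + n, pow_add S m n ▸ Set.mul_mem_mul hm hn⟩
  | inv g _ hg =>
    obtain ⟨n, hn⟩ := hg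
    exact ⟨n, by rwa [← hS, inv_pow, Set.inv_mem_inv]⟩

/-! ### Reflections -/

lemma exists_isReflAlong {α : V} (hα : α ≠ 0) : ∃ s : V ≃ₗᵢ[ℝ] V, IsReflAlong s α := by
  refine ⟨(ℝ ∙ α)ᗮ.reflection, hα, fun v => ?_⟩
  rw [Submodule.reflection_orthogonal_apply, Submodule.reflection_singleton_apply,
    real_inner_self_eq_norm_sq, real_inner_comm, ← Nat.cast_smul_eq_nsmul ℝ, smul_smul]
  simp only [Nat.cast_ofNat, RCLike.ofReal_real_eq_id, id_eq, neg_sub, mul_div_assoc]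

namespace IsReflAlong

variable {s t : V ≃ₗᵢ[ℝ] V} {α : V}

lemma eq (hs : IsReflAlong s α) (ht : IsReflAlong t α) : s = t := by
  ext v
  rw [hs.2, ht.2]

lemma apply_self (hs : IsReflAlong s α) : s α = -α := by
  rw [hs.2, mul_div_cancel_right₀ _ (inner_self_ne_zero.2 hs.1)]
  module

lemma mul_self (hs : IsReflAlong s α) : s * s = 1 := by
  ext v
  change s (s v) = v
  rw [hs.2 v, map_sub, map_smul, hs.apply_self, hs.2 v]
  module

lemma inv_eq (hs : IsReflAlong s α) : s⁻¹ = s :=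
  inv_eq_of_mul_eq_one_left hs.mul_self

lemma neg (hs : IsReflAlong s α) : IsReflAlong s (-α) := by
  refine ⟨neg_ne_zero.2 hs.1, fun v => ?_⟩
  rw [hs.2 v, inner_neg_neg, inner_neg_right, mul_neg, neg_div, neg_smul_neg]

lemma conj (hs : IsReflAlong s α) (g : V ≃ₗᵢ[ℝ] V) : IsReflAlong (g * s * g⁻¹) (g α) := by
  refine ⟨by simpa using hs.1, fun v => ?_⟩
  obtain ⟨u, rfl⟩ := g.surjective v
  change g (s (g.symm (g u))) = _
  rw [g.symm_apply_apply, hs.2, map_sub, map_smul, g.inner_map_map, g.inner_map_map]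

section LinearFunctional

variable {F : Type*} [FunLike F V ℝ] [LinearMapClass F ℝ V ℝ]

lemma map_apply (hs : IsReflAlong s α) (f : F) (v : V) :
    f (s v) = f v - 2 / ⟪α, α⟫ * (f α * ⟪v, α⟫) := by
  rw [hs.2, map_sub, map_smul, smul_eq_mul]
  ring

lemma map_apply_le_iff (hs : IsReflAlong s α) (f : F) {v : V} :
    f (s v) ≤ f v ↔ 0 ≤ f α * ⟪v, α⟫ := by
  have hα : 0 < 2 / ⟪α, α⟫ := div_pos two_pos (real_inner_self_pos.2 hs.1)
  rw [hs.map_apply, sub_le_self_iff, mul_nonneg_iff_of_pos_left hα]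

lemma map_apply_lt_iff (hs : IsReflAlong s α) (f : F) {v : V} :
    f (s v) < f v ↔ 0 < f α * ⟪v, α⟫ := by
  have hα : 0 < 2 / ⟪α, α⟫ := div_pos two_pos (real_inner_self_pos.2 hs.1)
  rw [hs.map_apply, sub_lt_self_iff, mul_pos_iff_of_pos_left hα]

end LinearFunctional

end IsReflAlong

/-- The reflections along the vectors of `I`, which generate `genSubgroup I`. The elements given by
words of length `n` in these reflections form the pointwise power `reflectionsAlong I ^ n`. -/
def reflectionsAlong (I : Set V) : Set (V ≃ₗᵢ[ℝ] V) :=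
  {s | ∃ β ∈ I, IsReflAlong s β}

lemma inv_reflectionsAlong (I : Set V) : (reflectionsAlong I)⁻¹ = reflectionsAlong I := by
  ext s
  constructor
  · rintro ⟨β, hβ, hs⟩
    exact ⟨β, hβ, by rwa [← inv_inv s, hs.inv_eq]⟩
  · rintro ⟨β, hβ, hs⟩
    exact ⟨β, hβ, by rwa [hs.inv_eq]⟩

lemma mem_genSubgroup {I : Set V} {s : V ≃ₗᵢ[ℝ] V} {α : V} (hα : α ∈ I) (hs : IsReflAlong s α) :
    s ∈ genSubgroup I :=
  Subgroup.subset_closure ⟨α, hα, hs⟩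

lemma map_genSubgroup_apply {F : Type*} [FunLike F V ℝ] [LinearMapClass F ℝ V ℝ] {f : F} {I : Set V}
    (hI : ∀ α ∈ I, f α = 0) {u : V ≃ₗᵢ[ℝ] V} (hu : u ∈ genSubgroup I) (x : V) : f (u x) = f x := by
  induction hu using Subgroup.closure_induction generalizing x with
  | mem s hs =>
    obtain ⟨β, hβ, hs⟩ := hs
    rw [hs.map_apply, hI β hβ, zero_mul, mul_zero, sub_zero]
  | one => rfl
  | mul u v _ _ hu hv => exact (hu (v x)).trans (hv x)
  | inv u _ hu => rw [← hu, LinearIsometryEquiv.coe_inv, u.apply_symm_apply]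

lemma exists_genSubgroup_inner_nonneg {I : Set V} {a : V} (hI : ∀ α ∈ I, 0 < ⟪a, α⟫)
    (hfin : (genSubgroup I : Set (V ≃ₗᵢ[ℝ] V)).Finite) (x : V) :
    ∃ v ∈ genSubgroup I, ∀ α ∈ I, 0 ≤ ⟪v x, α⟫ := by
  obtain ⟨v, hv, hmax⟩ := Set.exists_max_image _ (fun v : V ≃ₗᵢ[ℝ] V => ⟪a, v x⟫) hfin
    ⟨1, one_mem _⟩
  refine ⟨v, hv, fun α hα => ?_⟩
  have hα0 : α ≠ 0 := by
    rintro rfl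
    exact (hI 0 hα).ne' (inner_zero_right a)
  obtain ⟨s, hs⟩ := exists_isReflAlong hα0
  have hle : ⟪a, s (v x)⟫ ≤ ⟪a, v x⟫ := hmax (s * v) (mul_mem (mem_genSubgroup hα hs) hv)
  exact nonneg_of_mul_nonneg_right ((hs.map_apply_le_iff (innerₗ V a)).1 hle) (hI α hα)

/-! ### Positive and simple roots -/

section Roots

variable {W : Subgroup (V ≃ₗᵢ[ℝ] V)} {Φ Δ : Set V} {a : V}

namespace IsRootSystem

lemma reflection_mem (hΦ : IsRootSystem W Φ) {s : V ≃ₗᵢ[ℝ] V} {α : V} (hα : α ∈ Φ)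
    (hs : IsReflAlong s α) : s ∈ W := by
  rw [hΦ.gen]
  exact Subgroup.subset_closure ⟨α, hα, hs⟩

lemma genSubgroup_le_s16 (hΦ : IsRootSystem W Φ) {I : Set V} (hI : I ⊆ Φ) : genSubgroup I ≤ W :=
  (Subgroup.closure_le _).2 fun _ ⟨_, hβ, hs⟩ => hΦ.reflection_mem (hI hβ) hs

lemma map_mem_s16 (hΦ : IsRootSystem W Φ) {w : V ≃ₗᵢ[ℝ] V} (hw : w ∈ W) {α : V} (hα : α ∈ Φ) :
    w α ∈ Φ :=
  hΦ.stable w hw ▸ Set.mem_image_of_mem w hα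

lemma neg_mem_s16 (hΦ : IsRootSystem W Φ) {α : V} (hα : α ∈ Φ) : -α ∈ Φ :=
  ((hΦ.line α hα).ge (Set.mem_insert_of_mem α rfl)).1

lemma inner_ne_zero (hΦ : IsRootSystem W Φ) (ha : IsGeneric W a) {α : V} (hα : α ∈ Φ) :
    ⟪a, α⟫ ≠ 0 := by
  obtain ⟨s, hs⟩ := exists_isReflAlong (hΦ.ne_zero α hα)
  intro h
  apply ha s (hΦ.reflection_mem hα hs) ⟨α, hs⟩
  rw [hs.2, h, mul_zero, zero_div, zero_smul, sub_zero]

lemma mem_posSystem_or_neg_mem (hΦ : IsRootSystem W Φ) (ha : IsGeneric W a) {α : V} (hα : α ∈ Φ) :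
    α ∈ posSystem a Φ ∨ -α ∈ posSystem a Φ := by
  rcases (hΦ.inner_ne_zero ha hα).lt_or_gt with h | h
  · exact Or.inr ⟨hΦ.neg_mem_s16 hα, by rwa [inner_neg_right, neg_pos]⟩
  · exact Or.inl ⟨hα, h⟩

lemma eq_of_eq_smul (hΦ : IsRootSystem W Φ) {α β : V} (hα : α ∈ posSystem a Φ)
    (hβ : β ∈ posSystem a Φ) {t : ℝ} (h : β = t • α) : β = α := by
  rcases (hΦ.line α hα.1).le ⟨hβ.1, t, h⟩ with hβα | hβα
  · exact hβα
  · have hneg := hβ.2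
    rw [Set.mem_singleton_iff.1 hβα, inner_neg_right, neg_pos] at hneg
    exact absurd hα.2 hneg.not_gt

end IsRootSystem

lemma neg_notMem_posSystem {α : V} (hα : α ∈ posSystem a Φ) : -α ∉ posSystem a Φ := fun h => by
  have hneg := h.2
  rw [inner_neg_right, neg_pos] at hneg
  exact hneg.not_gt hα.2

namespace IsSimpleSystem

lemma subset_roots (hΔ : IsSimpleSystem (posSystem a Φ) Δ) : Δ ⊆ Φ :=
  hΔ.1.trans fun _ h => h.1

lemma inner_nonneg {P : Set V} (hΔ : IsSimpleSystem P Δ) {y : V} (hy : ∀ α ∈ Δ, 0 ≤ ⟪y, α⟫) {β : V}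
    (hβ : β ∈ P) : 0 ≤ ⟪y, β⟫ := by
  obtain ⟨c, hcΔ, hc0, rfl⟩ := hΔ.2.2 β hβ
  rw [Finsupp.sum, inner_sum]
  refine Finset.sum_nonneg fun v hv => ?_
  rw [inner_smul_right]
  exact mul_nonneg (hc0 v) (hy v (hcΔ hv))

lemma exists_inner_pos_s16 {P : Set V} (hΔ : IsSimpleSystem P Δ) {β : V} (hβ : β ∈ P) (hβ0 : β ≠ 0) :
    ∃ α ∈ Δ, 0 < ⟪β, α⟫ := by
  by_contra! h
  have hneg : 0 ≤ ⟪-β, β⟫ :=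
    hΔ.inner_nonneg (fun α hα => by rw [inner_neg_left]; exact neg_nonneg.2 (h α hα)) hβ
  rw [inner_neg_left, neg_nonneg] at hneg
  exact hneg.not_gt (real_inner_self_pos.2 hβ0)

/-- If `s β` were negative, `β` and `-s β` would be nonnegative combinations of `Δ` whose sum is a
multiple of `α`, which forces `β` to be a multiple of `α`. -/
lemma reflection_mem_posSystem (hΔ : IsSimpleSystem (posSystem a Φ) Δ) (hΦ : IsRootSystem W Φ)
    (ha : IsGeneric W a) {s : V ≃ₗᵢ[ℝ] V} {α β : V} (hα : α ∈ Δ) (hs : IsReflAlong s α)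
    (hβ : β ∈ posSystem a Φ) (hne : β ≠ α) : s β ∈ posSystem a Φ := by
  have hsβ : s β ∈ Φ := hΦ.map_mem_s16 (hΦ.reflection_mem (hΔ.subset_roots hα) hs) hβ.1
  refine (hΦ.mem_posSystem_or_neg_mem ha hsβ).resolve_right fun hneg => hne ?_
  obtain ⟨c, hcΔ, hc0, hc⟩ := hΔ.2.2 β hβ
  obtain ⟨c', hcΔ', hc0', hc'⟩ := hΔ.2.2 (-s β) hneg
  have hsum : β + -s β = (2 * ⟪β, α⟫ / ⟪α, α⟫) • α := by
    rw [hs.2 β]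
    abel
  have hβα : β = c α • α := hc.trans <|
    linearCombination_eq_smul_of_add_eq_smul (v := id) hΔ.2.1 hcΔ hcΔ' hc0 hc0' hα
      ((congrArg₂ (· + ·) hc hc').symm.trans hsum)
  exact hΦ.eq_of_eq_smul (hΔ.1 hα) hβ hβα

/-- Take `g` minimizing `⟪a, g β⟫` among the positive roots `g β`: a simple reflection making it
smaller would have to turn `g β` negative. -/
lemma exists_map_mem (hΔ : IsSimpleSystem (posSystem a Φ) Δ) (hΦ : IsRootSystem W Φ)
    (ha : IsGeneric W a) {β : V} (hβ : β ∈ posSystem a Φ) : ∃ g ∈ genSubgroup Δ, g β ∈ Δ := by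
  obtain ⟨_, ⟨hγ, g, hg, rfl⟩, hmin⟩ :=
    Set.exists_min_image {γ | γ ∈ posSystem a Φ ∧ ∃ g ∈ genSubgroup Δ, g β = γ}
      (fun γ => ⟪a, γ⟫) (hΦ.finite.subset fun γ hγ => hγ.1.1) ⟨β, hβ, 1, one_mem _, rfl⟩
  refine ⟨g, hg, ?_⟩
  obtain ⟨α, hα, hpos⟩ := hΔ.exists_inner_pos_s16 hγ (hΦ.ne_zero _ hγ.1)
  obtain ⟨s, hs⟩ := exists_isReflAlong (hΦ.ne_zero α (hΔ.subset_roots hα))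
  have hlt : ⟪a, s (g β)⟫ < ⟪a, g β⟫ :=
    (hs.map_apply_lt_iff (innerₗ V a)).2 (mul_pos (hΔ.1 hα).2 hpos)
  by_contra hgβ
  have hsγ : s (g β) ∈ posSystem a Φ :=
    hΔ.reflection_mem_posSystem hΦ ha hα hs hγ fun h => hgβ (h ▸ hα)
  exact hlt.not_ge (hmin _ ⟨hsγ, s * g, mul_mem (mem_genSubgroup hα hs) hg, rfl⟩)

lemma genSubgroup_eq (hΔ : IsSimpleSystem (posSystem a Φ) Δ) (hΦ : IsRootSystem W Φ)
    (ha : IsGeneric W a) : genSubgroup Δ = W := by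
  refine (hΦ.genSubgroup_le_s16 hΔ.subset_roots).antisymm ?_
  have hpos : ∀ β ∈ posSystem a Φ, ∀ s : V ≃ₗᵢ[ℝ] V, IsReflAlong s β → s ∈ genSubgroup Δ := by
    intro β hβ s hs
    obtain ⟨g, hg, hgβ⟩ := hΔ.exists_map_mem hΦ ha hβ
    have hconj : g * s * g⁻¹ ∈ genSubgroup Δ := mem_genSubgroup hgβ (hs.conj g)
    rwa [Subgroup.mul_mem_cancel_right _ (inv_mem hg), Subgroup.mul_mem_cancel_left _ hg] at hconj
  rw [hΦ.gen]
  refine (Subgroup.closure_le _).2 ?_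
  rintro s ⟨β, hβ, hs⟩
  rcases hΦ.mem_posSystem_or_neg_mem ha hβ with h | h
  · exact hpos β h s hs
  · exact hpos (-β) h s hs.neg

/-! ### Uniqueness of the dominant point of an orbit -/

/-- The deletion property: the letter of `w` that turns the image of `α` negative cancels `t`. -/
lemma exists_mul_mem_reflectionsAlong_pow (hΔ : IsSimpleSystem (posSystem a Φ) Δ)
    (hΦ : IsRootSystem W Φ) (ha : IsGeneric W a) {t : V ≃ₗᵢ[ℝ] V} {α : V} (hα : α ∈ Δ)
    (ht : IsReflAlong t α) {n : ℕ} {w : V ≃ₗᵢ[ℝ] V} (hw : w ∈ reflectionsAlong Δ ^ n)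
    (hneg : -w α ∈ posSystem a Φ) : ∃ m, m + 1 = n ∧ w * t ∈ reflectionsAlong Δ ^ m := by
  induction n generalizing w with
  | zero =>
    rw [pow_zero, Set.mem_one] at hw
    rw [hw] at hneg
    exact absurd hneg (neg_notMem_posSystem (hΔ.1 hα))
  | succ n ih =>
    rw [pow_succ'] at hw
    obtain ⟨s, hsΔ, u, hu, rfl⟩ := hw
    obtain ⟨β, hβ, hs⟩ := id hsΔ
    have huW : u ∈ W := hΔ.genSubgroup_eq hΦ ha ▸ Subgroup.pow_subset Subgroup.subset_closure hu
    rcases hΦ.mem_posSystem_or_neg_mem ha (hΦ.map_mem_s16 huW (hΔ.subset_roots hα)) with h | h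
    · -- Here `s` turns the positive root `u α` negative, so `u α = β` and `s = u * t * u⁻¹`.
      have huα : u α = β := by
        by_contra hne
        exact neg_notMem_posSystem (hΔ.reflection_mem_posSystem hΦ ha hβ hs h hne) hneg
      have hst : s = u * t * u⁻¹ := hs.eq (huα ▸ ht.conj u)
      refine ⟨n, rfl, ?_⟩
      have hcancel : s * u * t = u := by
        rw [hst, inv_mul_cancel_right, mul_assoc, ht.mul_self, mul_one]
      rwa [hcancel]
    · obtain ⟨m, rfl, hm⟩ := ih hu h
      refine ⟨m + 1, rfl, ?_⟩
      rw [pow_succ']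
      exact ⟨s, hsΔ, u * t, hm, (mul_assoc s u t).symm⟩

lemma eq_one_of_map_mem_posSystem (hΔ : IsSimpleSystem (posSystem a Φ) Δ) (hΦ : IsRootSystem W Φ)
    (ha : IsGeneric W a) {w : V ≃ₗᵢ[ℝ] V} (hw : w ∈ W) (hpos : ∀ α ∈ Δ, w α ∈ posSystem a Φ) :
    w = 1 := by
  classical
  have hword : ∃ n, w ∈ reflectionsAlong Δ ^ n :=
    exists_mem_pow_of_mem_closure (inv_reflectionsAlong Δ) ((hΔ.genSubgroup_eq hΦ ha).ge hw)
  obtain ⟨n, hn, hmin⟩ : ∃ n, w ∈ reflectionsAlong Δ ^ n ∧ ∀ m < n, w ∉ reflectionsAlong Δ ^ m :=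
    ⟨Nat.find hword, Nat.find_spec hword, fun _ => Nat.find_min hword⟩
  cases n with
  | zero => rwa [pow_zero, Set.mem_one] at hn
  | succ n =>
    rw [pow_succ] at hn
    obtain ⟨u, hu, t, ⟨α, hα, ht⟩, rfl⟩ := hn
    have hneg : -u α ∈ posSystem a Φ := by
      rw [← map_neg, ← ht.apply_self]
      exact hpos α hα
    obtain ⟨m, rfl, hm⟩ := hΔ.exists_mul_mem_reflectionsAlong_pow hΦ ha hα ht hu hneg
    exact absurd hm (hmin m (by omega))

lemma apply_eq_self_of_inner_nonneg (hΔ : IsSimpleSystem (posSystem a Φ) Δ)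
    (hΦ : IsRootSystem W Φ) (ha : IsGeneric W a) {g : V ≃ₗᵢ[ℝ] V} (hg : g ∈ W)
    (hdom : ∀ α ∈ Δ, 0 ≤ ⟪g a, α⟫) : g a = a := by
  have hinv : g⁻¹ = 1 := by
    refine hΔ.eq_one_of_map_mem_posSystem hΦ ha (inv_mem hg) fun α hα => ?_
    have hroot : g⁻¹ α ∈ Φ := hΦ.map_mem_s16 (inv_mem hg) (hΔ.subset_roots hα)
    have hnonneg : 0 ≤ ⟪a, g⁻¹ α⟫ := (hdom α hα).trans_eq (g.inner_map_eq_flip a α)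
    exact ⟨hroot, hnonneg.lt_of_ne' (hΦ.inner_ne_zero ha hroot)⟩
  rw [inv_eq_one.1 hinv]
  rfl

end IsSimpleSystem

/-! ### Maximizers on an orbit -/

lemma map_mem_orbitSet {w : V ≃ₗᵢ[ℝ] V} (hw : w ∈ W) {x : V} (hx : x ∈ orbitSet W a) :
    w x ∈ orbitSet W a := by
  obtain ⟨u, hu, rfl⟩ := hx
  exact ⟨w * u, mul_mem hw hu, rfl⟩

lemma image_orbitSet_s16 {w : V ≃ₗᵢ[ℝ] V} (hw : w ∈ W) : w '' orbitSet W a = orbitSet W a :=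
  Set.Subset.antisymm (Set.image_subset_iff.2 fun _ => map_mem_orbitSet hw) fun x hx =>
    ⟨w⁻¹ x, map_mem_orbitSet (inv_mem hw) hx, w.apply_symm_apply x⟩

lemma IsRootSystem.mul_inner_nonneg_of_mem_toExposed (hΦ : IsRootSystem W Φ) {l : StrongDual ℝ V}
    {x : V} (hx : x ∈ l.toExposed (orbitSet W a)) {α : V} (hα : α ∈ Φ) : 0 ≤ l α * ⟪x, α⟫ := by
  obtain ⟨s, hs⟩ := exists_isReflAlong (hΦ.ne_zero α hα)
  exact (hs.map_apply_le_iff l).1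
    (hx.2 _ (map_mem_orbitSet (hΦ.reflection_mem hα hs) hx.1))

theorem IsSimpleSystem.toExposed_orbitSet (hΔ : IsSimpleSystem (posSystem a Φ) Δ)
    (hΦ : IsRootSystem W Φ) (ha : IsGeneric W a) (hWfin : (W : Set (V ≃ₗᵢ[ℝ] V)).Finite)
    {l : StrongDual ℝ V} (hl : a ∈ l.toExposed (orbitSet W a)) :
    l.toExposed (orbitSet W a) = orbitSet (genSubgroup {α ∈ Δ | l α = 0}) a := by
  set I : Set V := {α ∈ Δ | l α = 0}
  have hIW : genSubgroup I ≤ W := hΦ.genSubgroup_le_s16 fun α hα => hΔ.subset_roots hα.1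
  have hmap {v : V ≃ₗᵢ[ℝ] V} (hv : v ∈ genSubgroup I) {x : V}
      (hx : x ∈ l.toExposed (orbitSet W a)) : v x ∈ l.toExposed (orbitSet W a) :=
    ⟨map_mem_orbitSet (hIW hv) hx.1,
      fun y hy => (hx.2 y hy).trans_eq (map_genSubgroup_apply (fun α hα => hα.2) hv x).symm⟩
  refine Set.Subset.antisymm (fun x hx => ?_) ?_
  · obtain ⟨v, hv, hvI⟩ := exists_genSubgroup_inner_nonneg (a := a) (fun α hα => (hΔ.1 hα.1).2)
      (hWfin.subset hIW) x
    have hdom : ∀ α ∈ Δ, 0 ≤ ⟪v x, α⟫ := fun α hα => by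
      have hα0 : 0 ≤ l α := nonneg_of_mul_nonneg_left
        (hΦ.mul_inner_nonneg_of_mem_toExposed hl (hΔ.subset_roots hα)) (hΔ.1 hα).2
      rcases hα0.eq_or_lt with h | h
      · exact hvI α ⟨hα, h.symm⟩
      · exact nonneg_of_mul_nonneg_right
          (hΦ.mul_inner_nonneg_of_mem_toExposed (hmap hv hx) (hΔ.subset_roots hα)) h
    obtain ⟨w, hw, rfl⟩ := hx.1
    have hvw : v (w a) = a := hΔ.apply_eq_self_of_inner_nonneg hΦ ha (mul_mem (hIW hv) hw) hdom
    exact ⟨v⁻¹, inv_mem hv, (v.symm_apply_eq.2 hvw.symm).symm⟩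
  · rintro _ ⟨u, hu, rfl⟩
    exact hmap hu hl

end Roots

theorem exposed_face_eq_translate_general
    (W : Subgroup (V ≃ₗᵢ[ℝ] V)) (hWfin : (W : Set (V ≃ₗᵢ[ℝ] V)).Finite)
    (Φ : Set V) (hΦ : IsRootSystem W Φ) (a : V) (ha : IsGeneric W a)
    (Δ : Set V) (hΔ : IsSimpleSystem (posSystem a Φ) Δ) :
    ∀ B : Set V, IsExposed ℝ (permutahedron W a) B → B.Nonempty →
      ∃ w ∈ W, ∃ I ⊆ Δ, B = (⇑w) '' permutahedron (genSubgroup I) a := by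
  intro B hB hBne
  obtain ⟨l, hl⟩ := hB hBne
  have hface : B = convexHull ℝ (l.toExposed (orbitSet W a)) :=
    hl.trans (toExposed_convexHull l _)
  obtain ⟨_, hmax⟩ := convexHull_nonempty_iff.1 (hface ▸ hBne)
  obtain ⟨w, hw, rfl⟩ := hmax.1
  let f : V →L[ℝ] V := w.toLinearIsometry.toContinuousLinearMap
  have htranslate : l.toExposed (orbitSet W a) = f '' (l.comp f).toExposed (orbitSet W a) := by
    rw [← toExposed_image]
    exact congrArg _ (image_orbitSet_s16 hw).symm
  have ha_max : a ∈ (l.comp f).toExposed (orbitSet W a) :=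
    w.injective.mem_set_image.1 (htranslate ▸ hmax)
  refine ⟨w, hw, {α ∈ Δ | l (w α) = 0}, fun α hα => hα.1, ?_⟩
  rw [hface, htranslate, hΔ.toExposed_orbitSet hΦ ha hWfin ha_max]
  exact (f.toLinearMap.image_convexHull _).symm

/-- every nonempty exposed face of the permutahedron is of the form `w(F_I)`
for some `w ∈ W` and `I ⊆ Δ`. -/
theorem exposed_face_eq_translate [FiniteDimensional ℝ V]
    (W : Subgroup (V ≃ₗᵢ[ℝ] V)) (hWfin : (W : Set (V ≃ₗᵢ[ℝ] V)).Finite)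
    (Φ : Set V) (hΦ : IsRootSystem W Φ) (a : V) (ha : IsGeneric W a)
    (Δ : Set V) (hΔ : IsSimpleSystem (posSystem a Φ) Δ) :
    ∀ B : Set V, IsExposed ℝ (permutahedron W a) B → B.Nonempty →
      ∃ w ∈ W, ∃ I ⊆ Δ, B = (⇑w) '' permutahedron (genSubgroup I) a :=
  exposed_face_eq_translate_general W hWfin Φ hΦ a ha Δ hΔ
end
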